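/- Let (X,d) be a complete separable metric space, let p ≥ 1 and C > 0. Then KR_{p,C} is a metric on the space of finite Borel measures on X: for all finite Borel measures μ, ν, τ one has KR_{p,C}(μ,ν) ≥ 0; KR_{p,C}(μ,ν) = 0 if and only if μ = ν; KR_{p,C}(μ,ν) = KR_{p,C}(ν,μ); and KR_{p,C}(μ,τ) ≤ KR_{p,C}(μ,ν) + KR_{p,C}(ν,τ). -/

import Mathlib

/-!
The triangle inequality rests on a gluing argument for sub-couplings. Given `π₁` for `(μ, ν)` and
`π₂` for `(ν, τ)`, their marginals `ν₁, ν₂ ≤ ν` on the middle space are compared: the common part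
`ν₁ ⊓ ν₂` is disintegrated along both plans, giving a measure `T` on triples whose pair marginals
are dominated by `π₁` and `π₂` (`exists_gluing`). Since `ν₁ ⊔ ν₂ ≤ ν`, the mass of `T` is at least
`m_{π₁} + m_{π₂} - m_ν`, which says exactly that the unmatched mass
`(m_μ + m_τ)/2 - m_T` is at most the sum of the unmatched masses of `π₁` and `π₂`. Minkowski's
inequality in `L^p(T)` for the transport part, then in `ℓ^p` to combine it with the two unmatched
masses (`minkowski_three`), gives the claim for each pair of plans, and infima are taken.

If the distance vanishes, there are plans of arbitrarily small cost; Markov's inequality gives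
`μ F ≤ ν (thickening δ F)` for closed `F` and all `δ > 0` (`measure_le_thickening`), hence
`μ F ≤ ν F`. By symmetry `μ` and `ν` agree on closed sets, so they are equal. Conversely the
diagonal plan has cost zero, and symmetry follows by exchanging the two factors.
-/

open MeasureTheory ENNReal

noncomputable section

variable {X : Type*} [MetricSpace X] [MeasurableSpace X]

/-- `π` is a sub-coupling of `(μ, ν)`: it puts at most `μ`-mass on `A × X` and
at most `ν`-mass on `X × B`, for all Borel sets `A, B`. -/
def IsSubcoupling (μ ν : Measure X) (π : Measure (X × X)) : Prop :=
  (∀ A : Set X, MeasurableSet A → π (A ×ˢ (Set.univ : Set X)) ≤ μ A) ∧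
  (∀ B : Set X, MeasurableSet B → π ((Set.univ : Set X) ×ˢ B) ≤ ν B)

/-- The objective of the `(p,C)`-Kantorovich–Rubinstein problem at a plan `π`:
`∫ d(x,y)^p dπ + C^p ((m_μ + m_ν)/2 − m_π)`. -/
def KRcost (p C : ℝ) (μ ν : Measure X) (π : Measure (X × X)) : ℝ≥0∞ :=
  (∫⁻ z, ENNReal.ofReal (dist z.1 z.2 ^ p) ∂π) +
    ENNReal.ofReal (C ^ p) * ((μ Set.univ + ν Set.univ) / 2 - π Set.univ)

/-- `KR_{p,C}(μ,ν)^p`, the infimum of the Kantorovich–Rubinstein objective over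
all sub-couplings of `(μ, ν)`. -/
def KRpow (p C : ℝ) (μ ν : Measure X) : ℝ≥0∞ :=
  ⨅ (π : Measure (X × X)) (_ : IsSubcoupling μ ν π), KRcost p C μ ν π

/-- The `(p,C)`-Kantorovich–Rubinstein distance. -/
def KR (p C : ℝ) (μ ν : Measure X) : ℝ :=
  (KRpow p C μ ν).toReal ^ (1 / p)

/-! ### Gluing -/

open ProbabilityTheory in
/-- Two plans `ρ₁`, `ρ₂` whose first marginals are both dominated by `ν` can be glued along the
largest mass that those marginals have in common. The last clause is the mass form of
`ν₁ + ν₂ - ν₁ ⊓ ν₂ = ν₁ ⊔ ν₂ ≤ ν`. -/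
lemma exists_gluing {Y : Type*} [MeasurableSpace Y] [StandardBorelSpace X] [Nonempty X]
    (ν : Measure Y) [IsFiniteMeasure ν] (ρ₁ ρ₂ : Measure (Y × X)) [IsFiniteMeasure ρ₁]
    [IsFiniteMeasure ρ₂] (h₁ : ρ₁.fst ≤ ν) (h₂ : ρ₂.fst ≤ ν) :
    ∃ T : Measure (Y × X × X), T.map (fun w => (w.1, w.2.1)) ≤ ρ₁ ∧
      T.map (fun w => (w.1, w.2.2)) ≤ ρ₂ ∧
      ρ₁ Set.univ + ρ₂ Set.univ ≤ ν Set.univ + T Set.univ := by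
  set f := ρ₁.fst.rnDeriv ν with hf
  set g := ρ₂.fst.rnDeriv ν with hg
  have hfm : Measurable f := Measure.measurable_rnDeriv _ _
  have hgm : Measurable g := Measure.measurable_rnDeriv _ _
  have hf1 : f ≤ᵐ[ν] 1 := Measure.rnDeriv_le_one_of_le h₁
  have hg1 : g ≤ᵐ[ν] 1 := Measure.rnDeriv_le_one_of_le h₂
  have ef : ν.withDensity f = ρ₁.fst :=
    Measure.withDensity_rnDeriv_eq _ _ (Measure.absolutelyContinuous_of_le h₁)
  have eg : ν.withDensity g = ρ₂.fst :=
    Measure.withDensity_rnDeriv_eq _ _ (Measure.absolutelyContinuous_of_le h₂)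
  set γ := ν.withDensity (fun y => min (f y) (g y)) with hγ
  have hγ₁ : γ ≤ ρ₁.fst := by
    rw [← ef]; exact withDensity_mono (ae_of_all _ fun y => min_le_left _ _)
  have hγ₂ : γ ≤ ρ₂.fst := by
    rw [← eg]; exact withDensity_mono (ae_of_all _ fun y => min_le_right _ _)
  have : IsFiniteMeasure γ := isFiniteMeasure_of_le _ hγ₁
  refine ⟨γ ⊗ₘ (ρ₁.condKernel ×ₖ ρ₂.condKernel), ?_, ?_, ?_⟩
  · have e : (γ ⊗ₘ (ρ₁.condKernel ×ₖ ρ₂.condKernel)).map (fun w => (w.1, w.2.1))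
        = γ ⊗ₘ ρ₁.condKernel := by
      have k := Measure.compProd_map (μ := γ) (κ := ρ₁.condKernel ×ₖ ρ₂.condKernel)
        (measurable_fst : Measurable (Prod.fst : X × X → X))
      rw [← Kernel.fst_eq, Kernel.fst_prod] at k
      exact k.symm
    rw [e]
    conv_rhs => rw [← ρ₁.disintegrate ρ₁.condKernel]
    refine Measure.le_iff.2 fun s hs => ?_
    rw [Measure.compProd_apply hs, Measure.compProd_apply hs]
    exact lintegral_mono' hγ₁ le_rfl
  · have e : (γ ⊗ₘ (ρ₁.condKernel ×ₖ ρ₂.condKernel)).map (fun w => (w.1, w.2.2))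
        = γ ⊗ₘ ρ₂.condKernel := by
      have k := Measure.compProd_map (μ := γ) (κ := ρ₁.condKernel ×ₖ ρ₂.condKernel)
        (measurable_snd : Measurable (Prod.snd : X × X → X))
      rw [← Kernel.snd_eq, Kernel.snd_prod] at k
      exact k.symm
    rw [e]
    conv_rhs => rw [← ρ₂.disintegrate ρ₂.condKernel]
    refine Measure.le_iff.2 fun s hs => ?_
    rw [Measure.compProd_apply hs, Measure.compProd_apply hs]
    exact lintegral_mono' hγ₂ le_rfl
  · rw [Measure.compProd_apply_univ, ← Measure.fst_univ (ρ := ρ₁), ← Measure.fst_univ (ρ := ρ₂),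
      ← ef, ← eg, hγ]
    simp only [withDensity_apply _ MeasurableSet.univ, Measure.restrict_univ]
    rw [← lintegral_add_left hfm, ← lintegral_one, ← lintegral_add_left measurable_const]
    refine lintegral_mono_ae ?_
    filter_upwards [hf1, hg1] with y hy1 hy2
    rw [← max_add_min (f y) (g y)]
    gcongr
    exact max_le hy1 hy2

/-! ### Sub-couplings and the objective -/

lemma IsSubcoupling.univ_le_left {μ ν : Measure X} {π : Measure (X × X)}
    (h : IsSubcoupling μ ν π) : π Set.univ ≤ μ Set.univ := by
  simpa using h.1 _ MeasurableSet.univ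

lemma IsSubcoupling.univ_le_right {μ ν : Measure X} {π : Measure (X × X)}
    (h : IsSubcoupling μ ν π) : π Set.univ ≤ ν Set.univ := by
  simpa using h.2 _ MeasurableSet.univ

lemma IsSubcoupling.univ_le_avg {μ ν : Measure X} {π : Measure (X × X)}
    (h : IsSubcoupling μ ν π) : π Set.univ ≤ (μ Set.univ + ν Set.univ) / 2 := by
  rw [ENNReal.le_div_iff_mul_le (by simp) (by simp), mul_two]
  exact add_le_add h.univ_le_left h.univ_le_right

lemma IsSubcoupling.swap {μ ν : Measure X} {π : Measure (X × X)} (h : IsSubcoupling μ ν π) :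
    IsSubcoupling ν μ (π.map Prod.swap) := by
  constructor
  · intro A hA
    rw [Measure.map_apply measurable_swap (hA.prod MeasurableSet.univ), Set.preimage_swap_prod]
    exact h.2 A hA
  · intro A hA
    rw [Measure.map_apply measurable_swap (MeasurableSet.univ.prod hA), Set.preimage_swap_prod]
    exact h.1 A hA

lemma measurable_cost [OpensMeasurableSpace X] [SecondCountableTopology X] (p : ℝ) :
    Measurable (fun z : X × X => ENNReal.ofReal (dist z.1 z.2 ^ p)) :=
  (measurable_dist.pow_const p).ennreal_ofReal

lemma KRcost_swap [OpensMeasurableSpace X] [SecondCountableTopology X] (p C : ℝ)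
    (μ ν : Measure X) (π : Measure (X × X)) :
    KRcost p C ν μ (π.map Prod.swap) = KRcost p C μ ν π := by
  unfold KRcost
  rw [lintegral_map (measurable_cost p) measurable_swap,
    Measure.map_apply measurable_swap MeasurableSet.univ, add_comm (ν Set.univ)]
  simp [dist_comm]

lemma KRpow_comm_le [OpensMeasurableSpace X] [SecondCountableTopology X] (p C : ℝ)
    (μ ν : Measure X) : KRpow p C ν μ ≤ KRpow p C μ ν :=
  le_iInf₂ fun π h => (iInf₂_le _ h.swap).trans (KRcost_swap p C μ ν π).le

lemma KRpow_comm [OpensMeasurableSpace X] [SecondCountableTopology X] (p C : ℝ)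
    (μ ν : Measure X) : KRpow p C μ ν = KRpow p C ν μ :=
  le_antisymm (KRpow_comm_le p C ν μ) (KRpow_comm_le p C μ ν)

/-- The zero plan is a competitor of finite cost. -/
lemma KRpow_ne_top (p C : ℝ) (μ ν : Measure X) [IsFiniteMeasure μ] [IsFiniteMeasure ν] :
    KRpow p C μ ν ≠ ∞ := by
  have h : IsSubcoupling μ ν 0 := ⟨fun A _ => by simp, fun A _ => by simp⟩
  refine ne_top_of_le_ne_top ?_ (iInf₂_le _ h)
  simp only [KRcost, lintegral_zero_measure, zero_add, Measure.coe_zero, Pi.zero_apply, tsub_zero]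
  exact ENNReal.mul_ne_top ENNReal.ofReal_ne_top
    (ENNReal.div_ne_top (ENNReal.add_ne_top.2 ⟨measure_ne_top _ _, measure_ne_top _ _⟩) (by simp))

/-! ### Identity of indiscernibles -/

/-- The diagonal plan transports `μ` to itself at no cost. -/
lemma KRpow_self [OpensMeasurableSpace X] [SecondCountableTopology X] {p : ℝ} (C : ℝ)
    (hp : 1 ≤ p) (μ : Measure X) : KRpow p C μ μ = 0 := by
  have hm : Measurable fun x : X => (x, x) := by fun_prop
  have h : IsSubcoupling μ μ (μ.map fun x => (x, x)) := by
    constructor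
    · intro A hA
      rw [Measure.map_apply hm (hA.prod MeasurableSet.univ)]
      exact measure_mono fun x hx => hx.1
    · intro A hA
      rw [Measure.map_apply hm (MeasurableSet.univ.prod hA)]
      exact measure_mono fun x hx => hx.2
  refine le_antisymm ((iInf₂_le _ h).trans ?_) zero_le
  unfold KRcost
  rw [lintegral_map (measurable_cost p) hm, Measure.map_apply hm MeasurableSet.univ]
  have : (μ Set.univ + μ Set.univ) / 2 = μ Set.univ := by
    rw [ENNReal.add_div, ENNReal.add_halves]
  simp [this, Real.zero_rpow (show p ≠ 0 by linarith)]

/-- A plan of small cost moves little mass further than `δ` and leaves little mass unmatched, so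
it bounds `μ F` by the `ν`-mass of the `δ`-neighbourhood of `F`. -/
lemma measure_le_thickening [OpensMeasurableSpace X] [SecondCountableTopology X] {p C δ : ℝ}
    (hp : 1 ≤ p) (hC : 0 < C) (hδ : 0 < δ) {μ ν : Measure X} [IsFiniteMeasure μ]
    [IsFiniteMeasure ν] {π : Measure (X × X)} (h : IsSubcoupling μ ν π) {F : Set X}
    (hF : IsClosed F) :
    μ F ≤ ν (Metric.thickening δ F) + KRcost p C μ ν π *
      ((ENNReal.ofReal (δ ^ p))⁻¹ + 2 * (ENNReal.ofReal (C ^ p))⁻¹) := by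
  set M := ENNReal.ofReal (C ^ p) with hM
  set D := ENNReal.ofReal (δ ^ p) with hD
  have hM0 : M ≠ 0 := by simpa [hM] using Real.rpow_pos_of_pos hC p
  have hD0 : D ≠ 0 := by simpa [hD] using Real.rpow_pos_of_pos hδ p
  have hMt : M ≠ ∞ := ENNReal.ofReal_ne_top
  have hDt : D ≠ ∞ := ENNReal.ofReal_ne_top
  have hπt : π Set.univ ≠ ∞ := ne_top_of_le_ne_top (measure_ne_top μ _) h.univ_le_left
  set I := ∫⁻ z, ENNReal.ofReal (dist z.1 z.2 ^ p) ∂π with hI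
  set q := (μ Set.univ + ν Set.univ) / 2 - π Set.univ with hq
  have hK : KRcost p C μ ν π = I + M * q := rfl
  have hfar : π {z | D ≤ ENNReal.ofReal (dist z.1 z.2 ^ p)} ≤ I * D⁻¹ := by
    rw [← div_eq_mul_inv]
    exact meas_ge_le_lintegral_div (measurable_cost p).aemeasurable hD0 hDt
  have hnear : π (F ×ˢ Set.univ) ≤ ν (Metric.thickening δ F) + I * D⁻¹ := by
    calc π (F ×ˢ Set.univ)
        ≤ π ((Set.univ ×ˢ Metric.thickening δ F) ∪
            {z | D ≤ ENNReal.ofReal (dist z.1 z.2 ^ p)}) := by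
          refine measure_mono fun z hz => ?_
          by_cases hd : dist z.1 z.2 < δ
          · refine Or.inl ⟨trivial, Metric.mem_thickening_iff.2 ⟨z.1, hz.1, ?_⟩⟩
            rwa [dist_comm]
          · refine Or.inr (ENNReal.ofReal_le_ofReal ?_)
            exact Real.rpow_le_rpow hδ.le (not_lt.1 hd) (by linarith)
      _ ≤ _ := (measure_union_le _ _).trans
          (add_le_add (h.2 _ Metric.isOpen_thickening.measurableSet) hfar)
  have hqπ : q + π Set.univ = (μ Set.univ + ν Set.univ) / 2 := tsub_add_cancel_of_le h.univ_le_avg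
  have hmass : μ Set.univ ≤ 2 * q + π Set.univ := by
    have h2 : μ Set.univ + ν Set.univ = 2 * q + π Set.univ + π Set.univ := by
      rw [add_assoc, ← two_mul (π Set.univ), ← mul_add, hqπ,
        ENNReal.mul_div_cancel (by simp) (by simp)]
    refine (ENNReal.add_le_add_iff_right hπt).1 ?_
    rw [← h2]
    gcongr
    exact h.univ_le_right
  have hleft : μ F ≤ 2 * q + π (F ×ˢ Set.univ) := by
    refine (ENNReal.add_le_add_iff_right (measure_ne_top μ Fᶜ)).1 ?_
    rw [measure_add_measure_compl hF.measurableSet, add_assoc]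
    refine hmass.trans ?_
    gcongr
    calc π Set.univ ≤ π (F ×ˢ Set.univ ∪ Fᶜ ×ˢ Set.univ) := by
          rw [← Set.union_prod, Set.union_compl_self, Set.univ_prod_univ]
      _ ≤ _ := (measure_union_le _ _).trans
          (add_le_add le_rfl (h.1 _ hF.measurableSet.compl))
  have hqM : q ≤ KRcost p C μ ν π * M⁻¹ := by
    rw [hK, ← div_eq_mul_inv, ENNReal.le_div_iff_mul_le (Or.inl hM0) (Or.inl hMt), mul_comm]
    exact le_add_self
  calc μ F ≤ 2 * q + (ν (Metric.thickening δ F) + I * D⁻¹) := hleft.trans (by gcongr)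
    _ ≤ 2 * (KRcost p C μ ν π * M⁻¹) +
        (ν (Metric.thickening δ F) + KRcost p C μ ν π * D⁻¹) := by
        gcongr
        rw [hK]; exact le_self_add
    _ = _ := by ring

lemma measure_closed_le_of_KRpow_eq_zero [OpensMeasurableSpace X] [SecondCountableTopology X]
    {p C : ℝ} (hp : 1 ≤ p) (hC : 0 < C) {μ ν : Measure X} [IsFiniteMeasure μ]
    [IsFiniteMeasure ν] (h : KRpow p C μ ν = 0) {F : Set X} (hF : IsClosed F) : μ F ≤ ν F := by
  have key : ∀ δ : ℝ, 0 < δ → μ F ≤ ν (Metric.thickening δ F) := by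
    intro δ hδ
    have hc : (ENNReal.ofReal (δ ^ p))⁻¹ + 2 * (ENNReal.ofReal (C ^ p))⁻¹ ≠ ∞ := by
      have h1 := Real.rpow_pos_of_pos hδ p
      have h2 := Real.rpow_pos_of_pos hC p
      simp [ENNReal.add_eq_top, ENNReal.mul_eq_top, h1, h2]
    set c := (ENNReal.ofReal (δ ^ p))⁻¹ + 2 * (ENNReal.ofReal (C ^ p))⁻¹
    have : μ F ≤ ν (Metric.thickening δ F) + KRpow p C μ ν * c := by
      unfold KRpow
      rw [ENNReal.iInf_mul_of_ne (by simp [c]) hc, ENNReal.add_iInf]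
      refine le_iInf fun π => ?_
      by_cases hπ : IsSubcoupling μ ν π
      · simpa [hπ] using measure_le_thickening hp hC hδ hπ hF
      · have hc0 : c ≠ 0 := by simp [c]
        simp [hπ, ENNReal.top_mul hc0]
    simpa [h] using this
  refine ge_of_tendsto (tendsto_measure_thickening_of_isClosed
    ⟨1, one_pos, measure_ne_top _ _⟩ hF) ?_
  filter_upwards [self_mem_nhdsWithin] with δ hδ using key δ hδ

lemma eq_of_KRpow_eq_zero [BorelSpace X] [SecondCountableTopology X]
    {p C : ℝ} (hp : 1 ≤ p) (hC : 0 < C) {μ ν : Measure X} [IsFiniteMeasure μ]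
    [IsFiniteMeasure ν] (h : KRpow p C μ ν = 0) : μ = ν := by
  have key : ∀ F : Set X, IsClosed F → μ F = ν F := fun F hF =>
    le_antisymm (measure_closed_le_of_KRpow_eq_zero hp hC h hF)
      (measure_closed_le_of_KRpow_eq_zero hp hC (KRpow_comm p C μ ν ▸ h) hF)
  refine ext_of_generate_finite _ ?_ isPiSystem_isClosed key (key _ isClosed_univ)
  rw [BorelSpace.measurable_eq (α := X), borel_eq_generateFrom_isClosed]

/-! ### Triangle inequality -/

/-- Minkowski's inequality in `ℓ^p` for the vectors `(I₁^{1/p}, a^{1/p}, 0)` and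
`(I₂^{1/p}, 0, b^{1/p})`. -/
lemma minkowski_three {p : ℝ} (hp : 1 ≤ p) {I I₁ I₂ a b : ℝ≥0∞}
    (h : I ^ (1 / p) ≤ I₁ ^ (1 / p) + I₂ ^ (1 / p)) :
    (I + a + b) ^ (1 / p) ≤ (I₁ + a) ^ (1 / p) + (I₂ + b) ^ (1 / p) := by
  have hp0 : 0 < p := by linarith
  have e : ∀ x : ℝ≥0∞, (x ^ (1 / p)) ^ p = x := fun x => by
    rw [← ENNReal.rpow_mul, one_div_mul_cancel hp0.ne', ENNReal.rpow_one]
  have := ENNReal.Lp_add_le (Finset.univ : Finset (Fin 3))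
    ![I₁ ^ (1 / p), a ^ (1 / p), 0] ![I₂ ^ (1 / p), 0, b ^ (1 / p)] hp
  simp only [Fin.sum_univ_three, Matrix.cons_val, add_zero, zero_add, e,
    ENNReal.zero_rpow_of_pos hp0] at this
  refine le_trans ?_ this
  gcongr
  rw [← e I]
  gcongr

lemma KRpow_rpow_le_cost_add [CompleteSpace X] [SecondCountableTopology X] [BorelSpace X]
    {p C : ℝ} (hp : 1 ≤ p) {μ ν τ : Measure X} [IsFiniteMeasure μ] [IsFiniteMeasure ν]
    [IsFiniteMeasure τ] {π₁ π₂ : Measure (X × X)} (h₁ : IsSubcoupling μ ν π₁)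
    (h₂ : IsSubcoupling ν τ π₂) :
    KRpow p C μ τ ^ (1 / p) ≤ KRcost p C μ ν π₁ ^ (1 / p) + KRcost p C ν τ π₂ ^ (1 / p) := by
  have hp0 : 0 < p := by linarith
  have hπ₁ : π₁ Set.univ ≠ ∞ := ne_top_of_le_ne_top (measure_ne_top μ _) h₁.univ_le_left
  have hπ₂ : π₂ Set.univ ≠ ∞ := ne_top_of_le_ne_top (measure_ne_top ν _) h₂.univ_le_left
  have : IsFiniteMeasure π₁ := ⟨hπ₁.lt_top⟩
  have : IsFiniteMeasure π₂ := ⟨hπ₂.lt_top⟩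
  rcases isEmpty_or_nonempty X with hX | hX
  · have e : μ = τ := Subsingleton.elim _ _
    rw [e, KRpow_self C hp, ENNReal.zero_rpow_of_pos (by positivity)]
    exact zero_le
  obtain ⟨T, hT₁, hT₂, hT⟩ := exists_gluing ν (π₁.map Prod.swap) π₂
    (Measure.le_iff.2 fun A hA => by
      rw [Measure.fst_apply hA]
      simpa [Set.prod_univ] using h₁.swap.1 A hA)
    (Measure.le_iff.2 fun A hA => by
      rw [Measure.fst_apply hA]
      simpa [Set.prod_univ] using h₂.1 A hA)
  have m₁ : Measurable fun w : X × X × X => (w.1, w.2.1) := by fun_prop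
  have m₂ : Measurable fun w : X × X × X => (w.1, w.2.2) := by fun_prop
  -- Points of `T` are triples `(y, x, z)` with the intermediate point `y` first.
  have m₃ : Measurable fun w : X × X × X => (w.2.1, w.2.2) := by fun_prop
  set π := T.map (fun w => (w.2.1, w.2.2)) with hπ
  have hπu : π Set.univ = T Set.univ := by rw [hπ, Measure.map_apply m₃ MeasurableSet.univ]; rfl
  have hsub : IsSubcoupling μ τ π := by
    constructor
    · intro A hA
      refine le_trans ?_ (h₁.swap.2 A hA)
      refine le_trans ?_ (hT₁ _)
      rw [hπ, Measure.map_apply m₃ (hA.prod MeasurableSet.univ),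
        Measure.map_apply m₁ (MeasurableSet.univ.prod hA)]
      exact measure_mono fun w hw => ⟨trivial, hw.1⟩
    · intro A hA
      refine le_trans ?_ (h₂.2 A hA)
      refine le_trans ?_ (hT₂ _)
      rw [hπ, Measure.map_apply m₃ (MeasurableSet.univ.prod hA),
        Measure.map_apply m₂ (MeasurableSet.univ.prod hA)]
      exact measure_mono fun w hw => ⟨trivial, hw.2⟩
  refine (ENNReal.rpow_le_rpow (iInf₂_le π hsub) (by positivity)).trans ?_
  have hofReal : ∀ x y : X, ENNReal.ofReal (dist x y ^ p) = edist x y ^ p := fun x y => by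
    rw [edist_dist, ENNReal.ofReal_rpow_of_nonneg dist_nonneg hp0.le]
  -- The transport part: Minkowski's inequality in `L^p(T)`.
  have hI : (∫⁻ z, ENNReal.ofReal (dist z.1 z.2 ^ p) ∂π) ^ (1 / p) ≤
      (∫⁻ z, ENNReal.ofReal (dist z.1 z.2 ^ p) ∂π₁) ^ (1 / p) +
      (∫⁻ z, ENNReal.ofReal (dist z.1 z.2 ^ p) ∂π₂) ^ (1 / p) := by
    have i₁ : ∫⁻ w, edist w.2.1 w.1 ^ p ∂T ≤ ∫⁻ z, ENNReal.ofReal (dist z.1 z.2 ^ p) ∂π₁ := by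
      calc ∫⁻ w, edist w.2.1 w.1 ^ p ∂T
          = ∫⁻ z, ENNReal.ofReal (dist z.1 z.2 ^ p) ∂(T.map fun w => (w.1, w.2.1)) := by
            rw [lintegral_map (measurable_cost p) m₁]
            simp only [hofReal, edist_comm]
        _ ≤ ∫⁻ z, ENNReal.ofReal (dist z.1 z.2 ^ p) ∂(π₁.map Prod.swap) :=
            lintegral_mono' hT₁ le_rfl
        _ = _ := by
            rw [lintegral_map (measurable_cost p) measurable_swap]
            simp only [Prod.fst_swap, Prod.snd_swap, dist_comm]
    have i₂ : ∫⁻ w, edist w.1 w.2.2 ^ p ∂T ≤ ∫⁻ z, ENNReal.ofReal (dist z.1 z.2 ^ p) ∂π₂ := by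
      calc ∫⁻ w, edist w.1 w.2.2 ^ p ∂T
          = ∫⁻ z, ENNReal.ofReal (dist z.1 z.2 ^ p) ∂(T.map fun w => (w.1, w.2.2)) := by
            rw [lintegral_map (measurable_cost p) m₂]
            simp only [hofReal]
        _ ≤ _ := lintegral_mono' hT₂ le_rfl
    rw [hπ, lintegral_map (measurable_cost p) m₃]
    calc (∫⁻ w, ENNReal.ofReal (dist w.2.1 w.2.2 ^ p) ∂T) ^ (1 / p)
        ≤ (∫⁻ w, ((fun w : X × X × X => edist w.2.1 w.1) +
            fun w : X × X × X => edist w.1 w.2.2) w ^ p ∂T)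
            ^ (1 / p) := by
          refine ENNReal.rpow_le_rpow (lintegral_mono fun w => ?_) (by positivity)
          rw [hofReal]
          gcongr
          exact edist_triangle _ _ _
      _ ≤ _ := ENNReal.lintegral_Lp_add_le (f := fun w : X × X × X => edist w.2.1 w.1)
          (g := fun w : X × X × X => edist w.1 w.2.2) (by fun_prop) (by fun_prop) hp
      _ ≤ _ := by gcongr
  -- The unmatched mass is subadditive, because the glued plan carries enough mass.
  have hq : (μ Set.univ + τ Set.univ) / 2 - π Set.univ ≤
      ((μ Set.univ + ν Set.univ) / 2 - π₁ Set.univ) +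
      ((ν Set.univ + τ Set.univ) / 2 - π₂ Set.univ) := by
    set q₁ := (μ Set.univ + ν Set.univ) / 2 - π₁ Set.univ with hq₁
    set q₂ := (ν Set.univ + τ Set.univ) / 2 - π₂ Set.univ with hq₂
    have e₁ : q₁ + π₁ Set.univ = (μ Set.univ + ν Set.univ) / 2 :=
      tsub_add_cancel_of_le h₁.univ_le_avg
    have e₂ : q₂ + π₂ Set.univ = (ν Set.univ + τ Set.univ) / 2 :=
      tsub_add_cancel_of_le h₂.univ_le_avg
    have hT' : π₁ Set.univ + π₂ Set.univ ≤ ν Set.univ + π Set.univ := by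
      rw [hπu]
      simpa [Measure.map_apply measurable_swap MeasurableSet.univ] using hT
    rw [tsub_le_iff_right]
    refine (ENNReal.add_le_add_iff_right (measure_ne_top ν Set.univ)).1 ?_
    calc (μ Set.univ + τ Set.univ) / 2 + ν Set.univ
        = (μ Set.univ + ν Set.univ) / 2 + (ν Set.univ + τ Set.univ) / 2 := by
          conv_lhs => rw [← ENNReal.add_halves (ν Set.univ)]
          simp only [ENNReal.add_div]
          ring
      _ = q₁ + q₂ + (π₁ Set.univ + π₂ Set.univ) := by rw [← e₁, ← e₂]; ring
      _ ≤ q₁ + q₂ + (ν Set.univ + π Set.univ) := by gcongr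
      _ = _ := by ring
  refine le_trans ?_ (minkowski_three hp hI)
  unfold KRcost
  refine ENNReal.rpow_le_rpow ?_ (by positivity)
  rw [add_assoc, ← mul_add]
  gcongr

lemma KRpow_triangle [CompleteSpace X] [SecondCountableTopology X] [BorelSpace X]
    {p : ℝ} (C : ℝ) (hp : 1 ≤ p) (μ ν τ : Measure X) [IsFiniteMeasure μ] [IsFiniteMeasure ν]
    [IsFiniteMeasure τ] :
    KRpow p C μ τ ^ (1 / p) ≤ KRpow p C μ ν ^ (1 / p) + KRpow p C ν τ ^ (1 / p) := by
  have e : ∀ a b : Measure X, KRpow p C a b ^ (1 / p) =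
      ⨅ (π : Measure (X × X)) (_ : IsSubcoupling a b π), KRcost p C a b π ^ (1 / p) := by
    intro a b
    have := (ENNReal.orderIsoRpow (1 / p) (by positivity)).map_iInf₂
      (fun (π : Measure (X × X)) (_ : IsSubcoupling a b π) => KRcost p C a b π)
    simpa only [KRpow, ENNReal.orderIsoRpow_apply] using this
  rw [e μ ν, e ν τ, ENNReal.iInf₂_add]
  refine le_iInf₂ fun π₁ h₁ => ?_
  rw [ENNReal.add_iInf₂]
  exact le_iInf₂ fun π₂ h₂ => KRpow_rpow_le_cost_add hp h₁ h₂

/-- `KR_{p,C}` is a metric on the space of finite Borel measures: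
nonnegativity, identity of indiscernibles, symmetry and the triangle inequality. -/
theorem statement9 [CompleteSpace X] [TopologicalSpace.SeparableSpace X] [BorelSpace X]
    (p C : ℝ) (hp : 1 ≤ p) (hC : 0 < C)
    (μ ν τ : Measure X) [IsFiniteMeasure μ] [IsFiniteMeasure ν] [IsFiniteMeasure τ] :
    0 ≤ KR p C μ ν ∧ (KR p C μ ν = 0 ↔ μ = ν) ∧ KR p C μ ν = KR p C ν μ ∧
      KR p C μ τ ≤ KR p C μ ν + KR p C ν τ := by
  have : SecondCountableTopology X := UniformSpace.secondCountable_of_separable X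
  have hp0 : 0 < p := by linarith
  have hμν := KRpow_ne_top p C μ ν
  have hντ := KRpow_ne_top p C ν τ
  refine ⟨by unfold KR; positivity, ?_, by unfold KR; rw [KRpow_comm], ?_⟩
  · rw [KR, Real.rpow_eq_zero ENNReal.toReal_nonneg (by positivity), ENNReal.toReal_eq_zero_iff]
    constructor
    · rintro (h | h)
      · exact eq_of_KRpow_eq_zero hp hC h
      · exact absurd h hμν
    · rintro rfl
      exact Or.inl (KRpow_self C hp μ)
  · have hr : 0 ≤ 1 / p := by positivity
    simp only [KR, ENNReal.toReal_rpow]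
    rw [← ENNReal.toReal_add (ENNReal.rpow_ne_top_of_nonneg hr hμν)
      (ENNReal.rpow_ne_top_of_nonneg hr hντ)]
    exact ENNReal.toReal_mono (ENNReal.add_ne_top.2 ⟨ENNReal.rpow_ne_top_of_nonneg hr hμν,
      ENNReal.rpow_ne_top_of_nonneg hr hντ⟩) (KRpow_triangle C hp μ ν τ)
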